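/- Let R be a ring, n a positive integer, m a natural number, and A a matrix in M_n(R). If the trace of A can be written as a sum of m commutators in R, then A can be written as a sum of ⌈m/n²⌉ + 2 commutators in M_n(R), where ⌈m/n²⌉ denotes the least integer greater than or equal to m/n². -/

import Mathlib

/-- `a` is a sum of `k` additive commutators `x*y - y*x` of elements of the ring. -/
def IsSumOfNCommutators {A : Type*} [Ring A] (k : ℕ) (a : A) : Prop :=
  ∃ x y : Fin k → A, a = ∑ i, (x i * y i - y i * x i)

/-!
Let `N` be the superdiagonal shift and `e` the matrix unit in the last diagonal position, so that
`N * Nᵀ = 1 - e`. As `N` is nilpotent, every matrix `B` has the form `S - Nᵀ * S * N`, and then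
`B = [N, Nᵀ * S] + e * S`. Comparing traces shows that the last diagonal entry of `S` is the trace
of `B`. If this vanishes then `e * S * e = 0`, so `e * S = [e, e * S]`, and `B` is a sum of two
commutators.

The trace of a commutator `[X, Y]` of `n × n` matrices is the sum of the `n ^ 2` commutators
`[X i j, Y j i]`, in which the entries can be prescribed freely. So `k` commutators of matrices
suffice to realize the trace of `A`, as soon as it is a sum of `k * n ^ 2` commutators, and the
difference has trace zero.
-/

namespace IsSumOfNCommutators

variable {A : Type*} [Ring A] {k l : ℕ} {a b : A}

theorem commutator_add_commutator (x y z w : A) :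
    IsSumOfNCommutators 2 ((x * y - y * x) + (z * w - w * z)) :=
  ⟨![x, z], ![y, w], by rw [Fin.sum_univ_two]; rfl⟩

theorem add (ha : IsSumOfNCommutators k a) (hb : IsSumOfNCommutators l b) :
    IsSumOfNCommutators (k + l) (a + b) := by
  obtain ⟨x, y, rfl⟩ := ha
  obtain ⟨z, w, rfl⟩ := hb
  exact ⟨Fin.append x z, Fin.append y w, by
    simp only [Fin.sum_univ_add, Fin.append_left, Fin.append_right]⟩

theorem mono (hkl : k ≤ l) (ha : IsSumOfNCommutators k a) : IsSumOfNCommutators l a := by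
  obtain ⟨d, rfl⟩ := Nat.exists_eq_add_of_le hkl
  have hzero : IsSumOfNCommutators d (0 : A) := ⟨0, 0, by simp⟩
  simpa only [add_zero] using ha.add hzero

end IsSumOfNCommutators

section Trace

variable {R ι : Type*} [Ring R] [Fintype ι]

theorem trace_mul_sub_mul (X Y : Matrix ι ι R) :
    (X * Y - Y * X).trace = ∑ p : ι × ι, (X p.1 p.2 * Y p.2 p.1 - Y p.2 p.1 * X p.1 p.2) := by
  simp only [Matrix.trace, Matrix.diag, Matrix.sub_apply, Matrix.mul_apply,
    Finset.sum_sub_distrib, Fintype.sum_prod_type]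
  exact congrArg _ Finset.sum_comm

theorem IsSumOfNCommutators.exists_trace_eq [DecidableEq ι] {k : ℕ} {a : R}
    (ha : IsSumOfNCommutators (k * Fintype.card ι ^ 2) a) :
    ∃ C : Matrix ι ι R, IsSumOfNCommutators k C ∧ C.trace = a := by
  obtain ⟨x, y, rfl⟩ := ha
  let e : Fin k × ι × ι ≃ Fin (k * Fintype.card ι ^ 2) :=
    Fintype.equivOfCardEq (by simp [sq])
  let X (t : Fin k) : Matrix ι ι R := .of fun i j => x (e (t, i, j))
  let Y (t : Fin k) : Matrix ι ι R := .of fun j i => y (e (t, i, j))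
  refine ⟨∑ t, (X t * Y t - Y t * X t), ⟨X, Y, rfl⟩, ?_⟩
  simp only [Matrix.trace_sum, trace_mul_sub_mul]
  rw [← e.sum_comp, Fintype.sum_prod_type]
  rfl

end Trace

section Ring

variable {A : Type*} [Ring A]

theorem exists_sub_mul_mul_eq_of_isNilpotent (u : A) {v : A} (hv : IsNilpotent v) (b : A) :
    ∃ s, s - u * s * v = b := by
  have hnil : IsNilpotent (LinearMap.mulRight ℤ v * LinearMap.mulLeft ℤ u) :=
    (LinearMap.commute_mulLeft_right u v).symm.isNilpotent_mul_right
      ((LinearMap.isNilpotent_mulRight_iff ℤ v).mpr hv)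
  exact ((Module.End.isUnit_iff _).mp hnil.isUnit_one_sub).surjective b

theorem sub_mul_mul_eq_commutator_add_commutator {u v e s : A} (hvu : v * u = 1 - e)
    (he : IsIdempotentElem e) (hese : e * s * e = 0) :
    s - u * s * v = (v * (u * s) - u * s * v) + (e * (e * s) - e * s * e) := by
  rw [← mul_assoc v, hvu, ← mul_assoc e, he.eq, hese]
  noncomm_ring

end Ring

section SuperdiagonalShift

open scoped Matrix

variable {R : Type*} [Ring R] {n : ℕ}

variable (R n) in
/-- The nilpotent Jordan block of size `n + 1`, with ones directly above the diagonal. -/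
def superdiagonalShift : Matrix (Fin (n + 1)) (Fin (n + 1)) R :=
  .of fun i j => if i.val + 1 = j.val then 1 else 0

local notation "N" => superdiagonalShift R n

theorem superdiagonalShift_apply_zero (i : Fin (n + 1)) : N i 0 = 0 := by
  simp [superdiagonalShift]

theorem superdiagonalShift_apply_succ (i : Fin (n + 1)) (j : Fin n) :
    N i j.succ = if i = j.castSucc then 1 else 0 := by
  simp [superdiagonalShift, Fin.ext_iff]

theorem mul_superdiagonalShift_apply_zero (M : Matrix (Fin (n + 1)) (Fin (n + 1)) R)
    (i : Fin (n + 1)) : (M * N) i 0 = 0 := by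
  simp [Matrix.mul_apply, superdiagonalShift_apply_zero]

theorem mul_superdiagonalShift_apply_succ (M : Matrix (Fin (n + 1)) (Fin (n + 1)) R)
    (i : Fin (n + 1)) (j : Fin n) : (M * N) i j.succ = M i j.castSucc := by
  simp [Matrix.mul_apply, superdiagonalShift_apply_succ]

theorem transpose_superdiagonalShift_mul_apply_succ
    (M : Matrix (Fin (n + 1)) (Fin (n + 1)) R) (i : Fin n) (j : Fin (n + 1)) :
    (Nᵀ * M) i.succ j = M i.castSucc j := by
  simp [Matrix.mul_apply, superdiagonalShift_apply_succ]

theorem superdiagonalShift_mul_transpose :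
    N * Nᵀ = 1 - Matrix.single (Fin.last n) (Fin.last n) 1 := by
  ext i j
  cases i using Fin.lastCases <;> cases j using Fin.lastCases <;>
    simp [Matrix.mul_apply, Fin.sum_univ_succ, superdiagonalShift_apply_zero,
      superdiagonalShift_apply_succ, Matrix.one_apply, eq_comm]

theorem superdiagonalShift_pow_apply_of_lt {l : ℕ} (i : Fin (n + 1)) {j : Fin (n + 1)}
    (hj : j.val < l) : (N ^ l) i j = 0 := by
  induction l generalizing j with
  | zero => exact absurd hj (Nat.not_lt_zero _)
  | succ l ih =>
    rw [pow_succ]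
    cases j using Fin.cases with
    | zero => exact mul_superdiagonalShift_apply_zero _ i
    | succ j =>
      rw [mul_superdiagonalShift_apply_succ]
      exact ih (Nat.lt_of_succ_lt_succ hj)

theorem isNilpotent_superdiagonalShift : IsNilpotent N :=
  ⟨n + 1, Matrix.ext fun i j => superdiagonalShift_pow_apply_of_lt i j.isLt⟩

theorem trace_sub_transpose_superdiagonalShift_mul_mul
    (S : Matrix (Fin (n + 1)) (Fin (n + 1)) R) :
    (S - Nᵀ * S * N).trace = S (Fin.last n) (Fin.last n) := by
  have hshift : (Nᵀ * S * N).trace = ∑ i : Fin n, S i.castSucc i.castSucc := by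
    simp only [Matrix.trace, Matrix.diag, Fin.sum_univ_succ, mul_superdiagonalShift_apply_zero,
      mul_superdiagonalShift_apply_succ, transpose_superdiagonalShift_mul_apply_succ, zero_add]
  have hsplit : S.trace = ∑ i : Fin n, S i.castSucc i.castSucc + S (Fin.last n) (Fin.last n) :=
    Fin.sum_univ_castSucc _
  rw [Matrix.trace_sub, hshift, hsplit, add_sub_cancel_left]

end SuperdiagonalShift

theorem isSumOfNCommutators_two_of_trace_eq_zero {R : Type*} [Ring R] {n : ℕ}
    {B : Matrix (Fin n) (Fin n) R} (hB : B.trace = 0) : IsSumOfNCommutators 2 B := by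
  cases n with
  | zero => exact ⟨0, 0, Subsingleton.elim _ _⟩
  | succ n =>
    let e : Matrix (Fin (n + 1)) (Fin (n + 1)) R := .single (Fin.last n) (Fin.last n) 1
    have he : IsIdempotentElem e := by simp [e, IsIdempotentElem]
    obtain ⟨S, rfl⟩ := exists_sub_mul_mul_eq_of_isNilpotent
      (superdiagonalShift R n).transpose isNilpotent_superdiagonalShift B
    have hlast : S (Fin.last n) (Fin.last n) = 0 :=
      (trace_sub_transpose_superdiagonalShift_mul_mul S).symm.trans hB
    have heSe : e * S * e = 0 := by simp [e, hlast]
    rw [sub_mul_mul_eq_commutator_add_commutator superdiagonalShift_mul_transpose he heSe]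
    exact .commutator_add_commutator _ _ _ _

/-- If the trace of an `n×n` matrix `A` over `R` is a sum of `m` commutators in `R`, then
`A` is a sum of `⌈m/n²⌉ + 2` commutators in `Mₙ(R)`.  (Here `(m + n^2 - 1) / n^2` is the
least natural number `≥ m / n²`.) -/
theorem stmt_12 {R : Type*} [Ring R] (n : ℕ) (hn : 0 < n) (m : ℕ)
    (A : Matrix (Fin n) (Fin n) R)
    (h : IsSumOfNCommutators m (Matrix.trace A)) :
    IsSumOfNCommutators ((m + n ^ 2 - 1) / n ^ 2 + 2) A := by
  rw [← Nat.ceilDiv_eq_add_pred_div]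
  have hm : m ≤ (m ⌈/⌉ n ^ 2) * Fintype.card (Fin n) ^ 2 := by
    rw [Fintype.card_fin, mul_comm]
    exact le_smul_ceilDiv (pow_pos hn 2)
  obtain ⟨C, hC, htrace⟩ := (h.mono hm).exists_trace_eq
  have hAC : IsSumOfNCommutators 2 (A - C) :=
    isSumOfNCommutators_two_of_trace_eq_zero (by rw [Matrix.trace_sub, htrace, sub_self])
  simpa only [add_sub_cancel] using hC.add hAC
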